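/- arXiv:2209.04236 — 4 statements merged into one kernel-verified Lean document; each statement's English description precedes it below -/
import Mathlib

section
/- Let d ≥ 2. There is a constant C > 0 depending only on d such that the following holds. Let z ∈ ℝ^d_+ and r ≥ 1 be such that b := z₀ − r ≥ 2, where x₀ := Σ_{j=1}^d x_j for x ∈ ℝ^d, and let D = D(z,r) = {y ∈ ℝ^d_+ : |z − y|₁ < r}. Let ξ ∈ D. Then for every t ∈ (b, b + 2r) there exists a (d−1)-dimensional parallelepiped P_t contained in the hyperplane Π_t = {x ∈ ℝ^d : x₀ = t}, whose d−1 edge directions all belong to the set V of vectors obtained from (1,−1,0,…,0) by permuting coordinates, such that P_t contains the slice D_t = D ∩ Π_t, P_t contains the orthogonal projection ξ_t of ξ onto Π_t, and λ_t(P_t) ≤ C · [1 + max(t − b, ξ₀ − b)]^{d−1} · e^{b} · μ(D), where λ_t denotes (d−1)-dimensional Lebesgue (Hausdorff) measure on Π_t. -/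
open MeasureTheory ENNReal

/-- The exponential measure `dμ(x) = exp(-|x₁|-⋯-|x_d|) dx` on `ℝ^d` (here on Euclidean
space); the diamond considered below is contained in `ℝ^d_+`, so this also computes the
restricted measure. -/
noncomputable def expMeasureE (d : ℕ) : Measure (EuclideanSpace ℝ (Fin d)) :=
  volume.withDensity (fun x => ENNReal.ofReal (Real.exp (-∑ i, |x i|)))

/-- The set `V` of vectors obtained from `(1,-1,0,…,0)` by permuting the coordinates. -/
def permV (d : ℕ) : Set (EuclideanSpace ℝ (Fin d)) :=
  {v | ∃ i j : Fin d, i ≠ j ∧ v i = 1 ∧ v j = -1 ∧ ∀ k, k ≠ i → k ≠ j → v k = 0}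

lemma box_volume (n : ℕ) (m : Fin (n+1)) (u l : Fin n → ℝ) (α β : ℝ) :
    volume {y : EuclideanSpace ℝ (Fin (n+1)) |
      (∀ j, y (m.succAbove j) ∈ Set.Ioo (u j) (u j + l j)) ∧ (∑ i, y i) ∈ Set.Ioo α β}
      = ENNReal.ofReal (β - α) * ∏ j, ENNReal.ofReal (l j) := by
  set S : Set (ℝ × (Fin n → ℝ)) := {q | q.2 ∈ Set.pi Set.univ (fun j => Set.Ioo (u j) (u j + l j)) ∧
    q.1 + ∑ j, q.2 j ∈ Set.Ioo α β} with hS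
  have hbox : MeasurableSet (Set.pi Set.univ (fun j => Set.Ioo (u j) (u j + l j))) :=
    MeasurableSet.univ_pi (fun j => measurableSet_Ioo)
  have hSm : MeasurableSet S := by
    apply MeasurableSet.inter
    · exact measurable_snd hbox
    · have : Measurable (fun q : ℝ × (Fin n → ℝ) => q.1 + ∑ j, q.2 j) := by fun_prop
      exact this measurableSet_Ioo
  have h1 := (volume_preserving_piFinSuccAbove (fun _ : Fin (n+1) => ℝ) m).measure_preimage
    hSm.nullMeasurableSet
  have hm2 : MeasurableSet ((MeasurableEquiv.piFinSuccAbove (fun _ : Fin (n+1) => ℝ) m) ⁻¹' S) :=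
    (MeasurableEquiv.measurable _) hSm
  have h2 := (PiLp.volume_preserving_ofLp (Fin (n+1))).measure_preimage
    hm2.nullMeasurableSet
  rw [h1] at h2
  have h3 : (volume : Measure (ℝ × (Fin n → ℝ))) S
      = ENNReal.ofReal (β - α) * ∏ j, ENNReal.ofReal (l j) := by
    rw [Measure.volume_eq_prod, Measure.prod_apply_symm hSm]
    have : (fun y : Fin n → ℝ => (volume : Measure ℝ) ((fun x => (x, y)) ⁻¹' S)) =
        (Set.pi Set.univ (fun j => Set.Ioo (u j) (u j + l j))).indicator
          (fun _ => ENNReal.ofReal (β - α)) := by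
      funext y
      by_cases hy : y ∈ Set.pi Set.univ (fun j => Set.Ioo (u j) (u j + l j))
      · rw [Set.indicator_of_mem hy]
        have : (fun x => (x, y)) ⁻¹' S = Set.Ioo (α - ∑ j, y j) (β - ∑ j, y j) := by
          ext x
          simp only [hS, Set.mem_preimage, Set.mem_ofPred_eq, hy, true_and, Set.mem_Ioo]
          constructor <;> rintro ⟨h, h'⟩ <;> constructor <;> linarith
        rw [this, Real.volume_Ioo]
        congr 1; ring
      · rw [Set.indicator_of_notMem hy]
        have : (fun x : ℝ => (x, y)) ⁻¹' S = ∅ := by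
          ext x
          simp only [hS, Set.mem_preimage, Set.mem_ofPred_eq, hy, false_and, Set.mem_empty_iff_false]
        rw [this, measure_empty]
    rw [this, lintegral_indicator hbox, setLIntegral_const, volume_pi_pi]
    simp [Real.volume_Ioo]
  rw [← h3, ← h2]
  congr 1
  ext y
  simp only [hS, Set.mem_ofPred_eq, Set.mem_preimage, Set.mem_pi, Set.mem_univ, true_imp_iff,
    Fin.sum_univ_succAbove _ m]
  rfl

/-- the spanning vectors `e_{m.succAbove j} - e_m` -/
noncomputable def vv {n : ℕ} (m : Fin (n+1)) (j : Fin n) : EuclideanSpace ℝ (Fin (n+1)) :=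
  EuclideanSpace.single (m.succAbove j) 1 - EuclideanSpace.single m 1

lemma vv_succ {n : ℕ} (m : Fin (n+1)) (j k : Fin n) :
    vv m j (m.succAbove k) = if k = j then 1 else 0 := by
  simp [vv, Fin.succAbove_ne]

lemma vv_self {n : ℕ} (m : Fin (n+1)) (j : Fin n) : vv m j m = -1 := by
  simp [vv, Fin.ne_succAbove]

lemma vv_mem {n : ℕ} (m : Fin (n+1)) (j : Fin n) : ∃ i k : Fin (n+1), i ≠ k ∧ vv m j i = 1 ∧ 
    vv m j k = -1 ∧ ∀ l, l ≠ i → l ≠ k → vv m j l = 0 := by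
  refine ⟨m.succAbove j, m, Fin.succAbove_ne m j, by simp [vv_succ], vv_self m j, ?_⟩
  intro l h1 h2
  obtain ⟨k, rfl⟩ := Fin.exists_succAbove_eq h2
  rw [vv_succ, if_neg]
  rintro rfl; exact h1 rfl

/-- expansion along the `vv` -/
lemma vv_expand {n : ℕ} (m : Fin (n+1)) (x : EuclideanSpace ℝ (Fin (n+1))) (hx : ∑ j, x j = 0) :
    x = ∑ j, x (m.succAbove j) • vv m j := by
  ext i
  rw [WithLp.ofLp_sum, Finset.sum_apply]
  simp only [PiLp.smul_apply, smul_eq_mul]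
  rcases eq_or_ne i m with rfl | h
  · rw [Fin.sum_univ_succAbove _ i] at hx
    simp only [vv_self, mul_neg, mul_one, Finset.sum_neg_distrib]
    linarith
  · obtain ⟨k, rfl⟩ := Fin.exists_succAbove_eq h
    simp [vv_succ]

lemma hausdorff_le (n : ℕ) : ∃ K : ℝ, 0 < K ∧ ∀ (m : Fin (n+1)) (p : EuclideanSpace ℝ (Fin (n+1)))
    (l : Fin n → ℝ), (∀ j, 0 ≤ l j) →
    μH[(n:ℝ)] ((fun c : Fin n → ℝ => p + ∑ i, c i • (l i • vv m i)) '' Set.Icc 0 1) ≤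
      ENNReal.ofReal (K * ∏ j, l j) := by
  refine ⟨((2 * n + 1 : ℝ))^n, by positivity, fun m p l hl => ?_⟩
  have hnorm : ∀ j, ‖vv m j‖ ≤ 2 := fun j => by
    refine (norm_sub_le _ _).trans ?_
    simp; norm_num
  have hlip : LipschitzWith (2 * n + 1 : NNReal) (fun c : Fin n → ℝ => p + ∑ i, c i • vv m i) := by
    apply LipschitzWith.of_dist_le_mul
    intro a b
    rw [dist_add_left, dist_eq_norm, ← Finset.sum_sub_distrib]
    simp only [← sub_smul]
    calc _ ≤ ∑ i, ‖(a i - b i) • vv m i‖ := norm_sum_le _ _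
      _ ≤ ∑ i : Fin n, dist a b * 2 := by
          apply Finset.sum_le_sum
          intro i _
          rw [norm_smul]
          exact mul_le_mul (dist_le_pi_dist a b i) (hnorm i) (norm_nonneg _) dist_nonneg
      _ ≤ _ := by
          simp
          nlinarith [dist_nonneg (x := a) (y := b)]
  have hsub : (fun c : Fin n → ℝ => p + ∑ i, c i • (l i • vv m i)) '' Set.Icc 0 1 ⊆
      (fun c : Fin n → ℝ => p + ∑ i, c i • vv m i) '' Set.Icc 0 l := by
    rintro _ ⟨c, hc, rfl⟩
    refine ⟨fun i => c i * l i, ⟨fun i => mul_nonneg (hc.1 i) (hl i), fun i => ?_⟩, ?_⟩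
    · exact mul_le_of_le_one_left (hl i) (hc.2 i)
    · simp [smul_smul]
  refine (measure_mono hsub).trans ((hlip.hausdorffMeasure_image_le (by positivity) _).trans ?_)
  have := hausdorffMeasure_pi_real (ι := Fin n)
  simp only [Fintype.card_fin] at this
  rw [this, Real.volume_Icc_pi, ENNReal.ofReal_mul (by positivity), 
    ENNReal.ofReal_prod_of_nonneg (fun i _ => hl i)]
  simp only [Pi.zero_apply, sub_zero]
  gcongr
  rw [ENNReal.rpow_natCast, ENNReal.ofReal_pow (by positivity)]
  gcongr
  rw [ENNReal.ofReal]
  apply le_of_eq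
  congr 1
  ext
  rw [Real.coe_toNNReal _ (by positivity)]
  push_cast
  rfl

lemma diamond_iff {N : ℕ} (z y : EuclideanSpace ℝ (Fin N)) :
    ∑ i, |z i - y i| = 2 * (∑ i, max (y i - z i) 0) - ∑ i, y i + ∑ i, z i := by
  rw [Finset.mul_sum, ← Finset.sum_sub_distrib, ← Finset.sum_add_distrib]
  apply Finset.sum_congr rfl
  intro i _
  rcases le_total (y i) (z i) with h | h
  · rw [abs_of_nonneg (by linarith), max_eq_right (by linarith)]; ring
  · rw [abs_of_nonpos (by linarith), max_eq_left (by linarith)]; ring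

lemma exists_base {n : ℕ} (m : Fin (n+1)) (z a : Fin (n+1) → ℝ) (b r : ℝ) (hz : ∀ i, 0 < z i)
    (hr : 1 ≤ r) (hb : 2 ≤ b) (hsum : ∑ i, z i = b + r) (hm : ∀ i, z i ≤ z m)
    (ha : ∀ i, a i = min (z i) (min b r)) :
    ∃ u : Fin (n+1) → ℝ, (∀ i, 0 ≤ u i) ∧ (∀ i, u i ≤ z i - a i / (2 * (n+1))) ∧
      ∑ i, u i = b ∧ b / (n+1) ≤ u m := by
  have hN : (1:ℝ) ≤ n + 1 := by have : (0:ℝ) ≤ n := by positivity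
                                linarith
  have hN0 : (0:ℝ) < n + 1 := by linarith
  set h : Fin (n+1) → ℝ := fun i => z i - a i / (2 * (n+1)) with hh
  have haz : ∀ i, a i ≤ z i := fun i => by rw [ha]; exact min_le_left _ _
  have har : ∀ i, a i ≤ r := fun i => by
    rw [ha]; exact (min_le_right _ _).trans (min_le_right _ _)
  have ha0 : ∀ i, 0 < a i := fun i => by
    rw [ha]; exact lt_min (hz i) (lt_min (by linarith) (by linarith))
  have hdiv : ∀ x : ℝ, 0 ≤ x → x / (2 * (n+1)) ≤ x := fun x hx =>
    div_le_self hx (by linarith)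
  have h0 : ∀ i, 0 ≤ h i := fun i => by
    have := hdiv _ (ha0 i).le
    have := haz i
    simp only [hh]; linarith
  have hH : b + r / 2 ≤ ∑ i, h i := by
    simp only [hh, Finset.sum_sub_distrib, hsum, ← Finset.sum_div]
    have : ∑ i, a i ≤ (n+1) * r := by
      calc _ ≤ ∑ i : Fin (n+1), r := Finset.sum_le_sum (fun i _ => har i)
        _ = _ := by simp
    have h2 : (∑ i, a i) / (2 * (n+1)) ≤ r / 2 := by
      rw [div_le_iff₀ (by positivity)]; nlinarith
    linarith
  have hHpos : 0 < ∑ i, h i := by linarith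
  have hle1 : b / ∑ i, h i ≤ 1 := by rw [div_le_one hHpos]; linarith
  have hge0 : 0 ≤ b / ∑ i, h i := by positivity
  have hmh : ∀ i, h i ≤ h m := fun i => by
    have : a m - a i ≤ z m - z i := by
      rw [ha, ha]
      have := hm i
      rcases min_cases (z m) (min b r) with h | h <;> rcases min_cases (z i) (min b r) with h' | h' <;>
        linarith
    have h3 : a m / (2 * (n+1)) - a i / (2 * (n+1)) ≤ z m - z i := by
      rw [← sub_div, div_le_iff₀ (by positivity)]
      have := hm i
      nlinarith
    simp only [hh]; linarith
  refine ⟨fun i => b / (∑ i, h i) * h i, fun i => mul_nonneg hge0 (h0 i),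
    fun i => mul_le_of_le_one_left (h0 i) hle1, ?_, ?_⟩
  · rw [← Finset.mul_sum]; field_simp
  · have : ∑ i, h i ≤ (n+1) * h m := by
      calc _ ≤ ∑ i : Fin (n+1), h m := Finset.sum_le_sum (fun i _ => hmh i)
        _ = _ := by simp
    change b / (n+1) ≤ b / (∑ i, h i) * h m
    rw [div_mul_eq_mul_div, div_le_div_iff₀ hN0 hHpos]
    nlinarith

lemma mu_lower {n : ℕ} (m : Fin (n+1)) (z : EuclideanSpace ℝ (Fin (n+1))) (a : Fin (n+1) → ℝ)
    (b r : ℝ) (hz : ∀ i, 0 < z i)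
    (hr : 1 ≤ r) (hb : 2 ≤ b) (hsum : ∑ i, z i = b + r) (hm : ∀ i, z i ≤ z m)
    (ha : ∀ i, a i = min (z i) (min b r)) (τ ε : ℝ) (hτ : τ = 1 / (4 * (n+1)^2))
    (hε : ε = 1 / (8 * (n+1)^3)) :
    ENNReal.ofReal (Real.exp (-(b+1)) * (τ * ∏ j, (ε * (1 + a (m.succAbove j))))) ≤
    expMeasureE (n+1) {y : EuclideanSpace ℝ (Fin (n+1)) |
      (∀ i, 0 < y i) ∧ ∑ i, |z i - y i| < r} := by
  obtain ⟨u, hu0, huz, husum, hum⟩ := exists_base m z a b r hz hr hb hsum hm ha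
  have hn0 : (0:ℝ) ≤ n := by positivity
  have hN0 : (0:ℝ) < n + 1 := by linarith
  have hε0 : 0 < ε := by rw [hε]; positivity
  have hτ0 : 0 < τ := by rw [hτ]; positivity
  have ha0 : ∀ i, 0 < a i := fun i => by
    rw [ha]; exact lt_min (hz i) (lt_min (by linarith) (by linarith))
  have hab : ∀ i, a i ≤ b := fun i => by
    rw [ha]; exact (min_le_right _ _).trans (min_le_left _ _)
  have ham : 1 / ((n:ℝ)+1) ≤ a m := by
    have h1 : b + r ≤ (n+1) * z m := by
      rw [← hsum]
      calc _ ≤ ∑ i : Fin (n+1), z m := Finset.sum_le_sum (fun i _ => hm i)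
        _ = _ := by simp
    have h2 : 1 / ((n:ℝ)+1) ≤ 1 := by rw [div_le_one hN0]; linarith
    rw [ha]
    refine le_min ?_ (le_min (by linarith) (by linarith))
    rw [div_le_iff₀ hN0]; linarith
  have hετ : 2 * (n * ε) < τ := by
    rw [hε, hτ, ← sub_pos]
    have : 1 / (4 * ((n:ℝ)+1)^2) - 2 * (n * (1 / (8 * (n+1)^3))) = 1 / (4 * (n+1)^3) := by
      field_simp; ring
    rw [this]; positivity
  have hεN : ε ≤ 1 / (2 * (n+1)) := by
    rw [hε]
    apply one_div_le_one_div_of_le (by positivity)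
    nlinarith [mul_nonneg hn0 hn0, mul_nonneg (mul_nonneg hn0 hn0) hn0]
  have hnε : n * ε * 2 ≤ 1 / (n+1) := by
    rw [hε, mul_one_div, div_mul_eq_mul_div, div_le_div_iff₀ (by positivity) hN0]
    nlinarith [mul_nonneg hn0 hn0, mul_nonneg (mul_nonneg hn0 hn0) hn0]
  have h2τ : 2 * τ ≤ a m / (2 * (n+1)) := by
    have : 2 * τ = (1 / (n+1)) / (2 * (n+1)) := by rw [hτ]; field_simp; norm_num
    rw [this]; gcongr
  have h2τ1 : 2 * τ ≤ 1 := by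
    rw [hτ, mul_one_div, div_le_one (by positivity)]
    nlinarith [mul_nonneg hn0 hn0]
  set S := {y : EuclideanSpace ℝ (Fin (n+1)) |
      (∀ j, y (m.succAbove j) ∈ Set.Ioo (u (m.succAbove j))
        (u (m.succAbove j) + ε * (1 + a (m.succAbove j)))) ∧
        (∑ i, y i) ∈ Set.Ioo (b + τ) (b + 2 * τ)} with hS
  have hSm : MeasurableSet S := by
    have h1 : MeasurableSet (⋂ j, {y : EuclideanSpace ℝ (Fin (n+1)) | y (m.succAbove j) ∈
        Set.Ioo (u (m.succAbove j)) (u (m.succAbove j) + ε * (1 + a (m.succAbove j)))}) := by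
      refine MeasurableSet.iInter fun j => ?_
      have : Measurable fun y : EuclideanSpace ℝ (Fin (n+1)) => y (m.succAbove j) := by fun_prop
      exact this measurableSet_Ioo
    have h2 : MeasurableSet {y : EuclideanSpace ℝ (Fin (n+1)) |
        (∑ i, y i) ∈ Set.Ioo (b + τ) (b + 2 * τ)} := by
      have : Measurable fun y : EuclideanSpace ℝ (Fin (n+1)) => ∑ i, y i := by fun_prop
      exact this measurableSet_Ioo
    convert h1.inter h2 using 1
    ext y
    simp [hS]
  have hpos : ∀ y ∈ S, ∀ i, 0 < y i := by
    intro y hy i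
    rcases eq_or_ne i m with rfl | h
    · have h1 := hy.2.1
      rw [Fin.sum_univ_succAbove _ i] at h1 husum
      have h2 : ∑ j, y (i.succAbove j) ≤ ∑ j, u (i.succAbove j) + n * ε * (2 * b) := by
        calc _ ≤ ∑ j : Fin n, (u (i.succAbove j) + ε * (2 * b)) := by
              apply Finset.sum_le_sum
              intro j _
              refine (hy.1 j).2.le.trans ?_
              have := hab (i.succAbove j)
              gcongr
              linarith
          _ = _ := by rw [Finset.sum_add_distrib]; simp; ring
      have h3 : n * ε * (2 * b) ≤ b / (n+1) := by
        calc _ = n * ε * 2 * b := by ring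
          _ ≤ 1 / (n+1) * b := by gcongr
          _ = _ := by ring
      linarith
    · obtain ⟨k, rfl⟩ := Fin.exists_succAbove_eq h
      exact (hu0 _).trans_lt (hy.1 k).1
  have hSD : S ⊆ {y : EuclideanSpace ℝ (Fin (n+1)) |
      (∀ i, 0 < y i) ∧ ∑ i, |z i - y i| < r} := by
    intro y hy
    refine ⟨hpos y hy, ?_⟩
    rw [diamond_iff, hsum, Fin.sum_univ_succAbove (fun i => max (y i - z i) 0) m]
    have h1 : max (y m - z m) 0 = 0 := by
      apply max_eq_right
      have h1 := hy.2.2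
      rw [Fin.sum_univ_succAbove _ m] at h1 husum
      have h2 : ∑ j, u (m.succAbove j) ≤ ∑ j, y (m.succAbove j) :=
        Finset.sum_le_sum fun j _ => (hy.1 j).1.le
      have := huz m
      linarith
    have h2 : ∑ j, max (y (m.succAbove j) - z (m.succAbove j)) 0 ≤ n * ε := by
      calc _ ≤ ∑ j : Fin n, ε := by
            apply Finset.sum_le_sum
            intro j _
            apply max_le _ hε0.le
            have h1 := (hy.1 j).2
            have h2 := huz (m.succAbove j)
            have h3 := ha0 (m.succAbove j)
            have h4 : ε * a (m.succAbove j) ≤ a (m.succAbove j) / (2 * (n+1)) := by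
              calc _ ≤ 1 / (2 * (n+1)) * a (m.succAbove j) := by gcongr
                _ = _ := by ring
            linarith
        _ = _ := by simp
    have := hy.2.1
    rw [h1]
    linarith
  have hvol := box_volume n m (fun j => u (m.succAbove j))
    (fun j => ε * (1 + a (m.succAbove j))) (b + τ) (b + 2 * τ)
  have hl0 : ∀ j, 0 ≤ ε * (1 + a (m.succAbove j)) := fun j => by
    have := ha0 (m.succAbove j)
    positivity
  calc ENNReal.ofReal (Real.exp (-(b+1)) * (τ * ∏ j, (ε * (1 + a (m.succAbove j)))))
      = ENNReal.ofReal (Real.exp (-(b+1))) * volume S := by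
        rw [hvol, ENNReal.ofReal_mul (by positivity), ENNReal.ofReal_mul hτ0.le,
          ENNReal.ofReal_prod_of_nonneg (fun j _ => hl0 j)]
        congr 3
        ring
    _ = ∫⁻ y in S, ENNReal.ofReal (Real.exp (-(b+1))) := by rw [setLIntegral_const]
    _ ≤ ∫⁻ y in S, ENNReal.ofReal (Real.exp (-∑ i, |y i|)) := by
        apply setLIntegral_mono' hSm
        intro y hy
        apply ENNReal.ofReal_le_ofReal
        apply Real.exp_le_exp.2
        rw [Finset.sum_congr rfl (fun i _ => abs_of_pos (hpos y hy i))]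
        have := hy.2.2
        linarith
    _ = expMeasureE (n+1) S := by rw [expMeasureE, withDensity_apply _ hSm]
    _ ≤ _ := measure_mono hSD

lemma interval_bound (z b r a T t x s q : ℝ) (ha : a = min z (min b r)) (hq : |q| ≤ T)
    (hs : s ≤ b + T) (hx0 : 0 < x) (hxs : x ≤ s) (hxz : |z - x| < r) (hxT : x - z ≤ T) :
    0 ≤ x + q - (max 0 (z - r) - T) ∧ x + q - (max 0 (z - r) - T) ≤ a + 3 * T := by
  have h1 := abs_le.1 hq
  have h2 := abs_lt.1 hxz
  have h3 : x ≤ max 0 (z - r) + a + T := by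
    rw [ha]
    rcases min_cases z (min b r) with h | h <;> rcases min_cases b r with h' | h' <;>
      rcases max_cases 0 (z - r) with h'' | h'' <;> linarith
  constructor
  · rcases max_cases 0 (z - r) with h | h <;> linarith
  · linarith

theorem main_aux (n : ℕ) :
    ∃ C : ℝ, 0 < C ∧
      ∀ (z : EuclideanSpace ℝ (Fin (n+1))) (r : ℝ), (∀ i, 0 < z i) → 1 ≤ r →
        2 ≤ (∑ j, z j) - r →
        ∀ ξ ∈ {y : EuclideanSpace ℝ (Fin (n+1)) | (∀ i, 0 < y i) ∧ ∑ i, |z i - y i| < r},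
          ∀ t : ℝ, (∑ j, z j) - r < t → t < (∑ j, z j) + r →
            ∃ (p : EuclideanSpace ℝ (Fin (n+1))) (w : Fin n → EuclideanSpace ℝ (Fin (n+1))),
              (∑ j, p j) = t ∧
              (∀ i, ∃ c : ℝ, 0 < c ∧ ∃ v ∈ permV (n+1), w i = c • v) ∧
              (∀ x : EuclideanSpace ℝ (Fin (n+1)), (∑ j, x j) = 0 →
                x ∈ Submodule.span ℝ (Set.range w)) ∧
              {y : EuclideanSpace ℝ (Fin (n+1)) | (∀ i, 0 < y i) ∧ ∑ i, |z i - y i| < r}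
                  ∩ {x | (∑ j, x j) = t}
                ⊆ (fun c : Fin n → ℝ => p + ∑ i, c i • w i) '' Set.Icc 0 1 ∧
              (∃ ξt : EuclideanSpace ℝ (Fin (n+1)),
                (∀ j, ξt j = ξ j + (t - ∑ j, ξ j) / ((n+1 : ℕ) : ℝ)) ∧
                ξt ∈ (fun c : Fin n → ℝ => p + ∑ i, c i • w i) '' Set.Icc 0 1) ∧
              μH[((n+1 : ℕ) : ℝ) - 1]
                  ((fun c : Fin n → ℝ => p + ∑ i, c i • w i) '' Set.Icc 0 1)
                ≤ ENNReal.ofReal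
                    (C * (1 + max (t - ((∑ j, z j) - r)) ((∑ j, ξ j) - ((∑ j, z j) - r)))
                        ^ n
                      * Real.exp ((∑ j, z j) - r))
                  * expMeasureE (n+1)
                      {y : EuclideanSpace ℝ (Fin (n+1)) |
                        (∀ i, 0 < y i) ∧ ∑ i, |z i - y i| < r} := by
  obtain ⟨K, hK, hH⟩ := hausdorff_le n
  obtain ⟨τ, hτ⟩ : ∃ τ : ℝ, τ = 1 / (4 * (n+1)^2) := ⟨_, rfl⟩
  obtain ⟨ε, hε⟩ : ∃ ε : ℝ, ε = 1 / (8 * (n+1)^3) := ⟨_, rfl⟩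
  have hε0 : 0 < ε := by rw [hε]; positivity
  have hτ0 : 0 < τ := by rw [hτ]; positivity
  refine ⟨K * 3 ^ n * Real.exp 1 / (τ * ε ^ n), by positivity, ?_⟩
  intro z r hz hr hb ξ hξ t ht1 ht2
  obtain ⟨b, hbdef⟩ : ∃ b, b = (∑ j, z j) - r := ⟨_, rfl⟩
  rw [← hbdef] at hb ht1 ⊢
  have hsum : ∑ i, z i = b + r := by linarith
  obtain ⟨T, hT⟩ : ∃ T, T = max (t - b) ((∑ j, ξ j) - b) := ⟨_, rfl⟩
  rw [← hT]
  have hTt : t - b ≤ T := hT ▸ le_max_left _ _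
  have hTξ : (∑ j, ξ j) - b ≤ T := hT ▸ le_max_right _ _
  have hT0 : 0 < T := by linarith
  obtain ⟨m, hm⟩ : ∃ m, ∀ i, z i ≤ z m := Finite.exists_max z
  set a : Fin (n+1) → ℝ := fun i => min (z i) (min b r) with ha
  have ha0 : ∀ i, 0 < a i := fun i => lt_min (hz i) (lt_min (by linarith) (by linarith))
  have hμ := mu_lower m z a b r hz hr hb hsum hm (fun i => rfl) τ ε hτ hε
  set l : Fin n → ℝ := fun j => a (m.succAbove j) + 3 * T with hl
  have hl0 : ∀ j, 0 < l j := fun j => by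
    have := ha0 (m.succAbove j)
    simp only [hl]; linarith
  set lo : Fin n → ℝ := fun j => max 0 (z (m.succAbove j) - r) - T with hlo
  set p : EuclideanSpace ℝ (Fin (n+1)) :=
    WithLp.toLp 2 (m.insertNth (t - ∑ j, lo j) lo) with hp
  have hpm : ∀ j, p (m.succAbove j) = lo j := fun j => by simp [hp]
  have hpsum : ∑ j, p j = t := by
    rw [Fin.sum_univ_succAbove _ m]; simp [hp]
  have key : ∀ x : EuclideanSpace ℝ (Fin (n+1)), ∑ j, x j = t →
      (∀ j, 0 ≤ x (m.succAbove j) - lo j ∧ x (m.succAbove j) - lo j ≤ l j) →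
      x ∈ (fun c : Fin n → ℝ => p + ∑ i, c i • (l i • vv m i)) '' Set.Icc 0 1 := by
    intro x hx hj
    refine ⟨fun j => (x (m.succAbove j) - lo j) / l j,
      ⟨fun j => div_nonneg (hj j).1 (hl0 j).le, fun j => (div_le_one (hl0 j)).2 (hj j).2⟩, ?_⟩
    have := vv_expand m (x - p) (by simp [hx, hpsum])
    simp only [smul_smul]
    rw [eq_comm, ← sub_eq_iff_eq_add', this]
    apply Finset.sum_congr rfl
    intro j _
    rw [div_mul_cancel₀ _ (hl0 j).ne']
    simp [hpm]
  have facts : ∀ y ∈ {y : EuclideanSpace ℝ (Fin (n+1)) | (∀ i, 0 < y i) ∧ ∑ i, |z i - y i| < r},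
      (b < ∑ i, y i) ∧ ∀ i, y i ≤ ∑ i, y i ∧ |z i - y i| < r ∧ y i - z i ≤ (∑ i, y i) - b := by
    rintro y ⟨hy0, hy⟩
    have h1 : 0 ≤ ∑ i, max (y i - z i) 0 := Finset.sum_nonneg fun i _ => le_max_right _ _
    have h2 := hy
    rw [diamond_iff, hsum] at h2
    refine ⟨by linarith, fun i => ⟨Finset.single_le_sum (fun i _ => (hy0 i).le) (Finset.mem_univ i),
      lt_of_le_of_lt (Finset.single_le_sum (f := fun i => |z i - y i|)
        (fun i _ => abs_nonneg _) (Finset.mem_univ i)) hy, ?_⟩⟩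
    have h3 : max (y i - z i) 0 ≤ ∑ i, max (y i - z i) 0 :=
      Finset.single_le_sum (f := fun i => max (y i - z i) 0)
        (fun i _ => le_max_right _ _) (Finset.mem_univ i)
    have := le_max_left (y i - z i) 0
    linarith
  refine ⟨p, fun j => l j • vv m j, hpsum, fun j => ⟨l j, hl0 j, vv m j, vv_mem m j, rfl⟩,
    ?_, ?_, ?_, ?_⟩
  · intro x hx
    rw [vv_expand m x hx]
    refine Submodule.sum_mem _ fun j _ => Submodule.smul_mem _ _ ?_
    have : vv m j = (l j)⁻¹ • (l j • vv m j) := by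
      rw [smul_smul, inv_mul_cancel₀ (hl0 j).ne', one_smul]
    rw [this]
    exact Submodule.smul_mem _ _ (Submodule.subset_span ⟨j, rfl⟩)
  · rintro y ⟨hy, hyt⟩
    have hyt' : ∑ j, y j = t := hyt
    apply key y hyt
    intro j
    obtain ⟨h1, h2⟩ := facts y hy
    obtain ⟨h3, h4, h5⟩ := h2 (m.succAbove j)
    have := interval_bound _ b r _ T t (y (m.succAbove j)) t 0 (by rfl) (by simpa using hT0.le)
      (by linarith) (hy.1 _) (by linarith) h4 (by linarith)
    simpa [hl, hlo, ha] using this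
  · refine ⟨WithLp.toLp 2 (fun j => ξ j + (t - ∑ j, ξ j) / ((n+1 : ℕ) : ℝ)), fun j => rfl, ?_⟩
    apply key
    · simp only [Finset.sum_add_distrib]
      simp
      field_simp
      ring
    · intro j
      obtain ⟨h1, h2⟩ := facts ξ hξ
      obtain ⟨h3, h4, h5⟩ := h2 (m.succAbove j)
      have hq : |(t - ∑ j, ξ j) / ((n+1 : ℕ) : ℝ)| ≤ T := by
        rw [abs_div, Nat.abs_cast]
        refine (div_le_self (abs_nonneg _) (by simp)).trans ?_
        rw [abs_le]; constructor <;> linarith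
      exact interval_bound _ b r _ T t (ξ (m.succAbove j)) (∑ j, ξ j) _ (by rfl) hq
        (by linarith) (hξ.1 _) h3 h4 (by linarith)
  · have hd : (((n+1 : ℕ) : ℝ) - 1) = n := by push_cast; ring
    rw [hd]
    refine (hH m p l (fun j => (hl0 j).le)).trans ?_
    refine le_trans ?_ (mul_le_mul_right hμ _)
    rw [← ENNReal.ofReal_mul (by positivity)]
    apply ENNReal.ofReal_le_ofReal
    have h1 : ∏ j, l j ≤ ∏ j : Fin n, (3 * (1 + T) * (1 + a (m.succAbove j))) := by
      apply Finset.prod_le_prod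
      · intro j _; exact (hl0 j).le
      · intro j _
        have := ha0 (m.succAbove j)
        simp only [hl]
        nlinarith [mul_pos this hT0]
    have h2 : Real.exp 1 * Real.exp b * Real.exp (-(b+1)) = 1 := by
      rw [← Real.exp_add, ← Real.exp_add, Real.exp_eq_one_iff]; ring
    calc K * ∏ j, l j ≤ K * ∏ j : Fin n, (3 * (1 + T) * (1 + a (m.succAbove j))) := by gcongr
      _ = K * 3^n * (1+T)^n * ∏ j : Fin n, (1 + a (m.succAbove j)) := by
          rw [Finset.prod_mul_distrib]; simp [mul_pow]; ring
      _ = (K * 3^n * (1+T)^n * ∏ j : Fin n, (1 + a (m.succAbove j))) *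
            (Real.exp 1 * Real.exp b * Real.exp (-(b+1))) := by rw [h2, mul_one]
      _ = _ := by
          rw [Finset.prod_mul_distrib (f := fun _ => ε)]; simp only [Finset.prod_const, Finset.card_univ, Fintype.card_fin]
          field_simp

/-- Proposition: slices of a diamond `D = D(z,r) ⊆ ℝ^d_+` with `b = z₀ - r ≥ 2`, `r ≥ 1`.
For `ξ ∈ D` and `t ∈ (b, b+2r)` there is a `(d-1)`-dimensional parallelepiped `P_t ⊆ Π_t`
with edge directions from `V`, containing the slice `D ∩ Π_t` and the projection `ξ_t`
of `ξ` onto `Π_t`, with `λ_t(P_t) ≤ C [1 + max(t-b, ξ₀-b)]^{d-1} e^b μ(D)`. -/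
theorem diamond_slice_parallelepiped (d : ℕ) (hd : 2 ≤ d) :
    ∃ C : ℝ, 0 < C ∧
      ∀ (z : EuclideanSpace ℝ (Fin d)) (r : ℝ), (∀ i, 0 < z i) → 1 ≤ r →
        2 ≤ (∑ j, z j) - r →
        ∀ ξ ∈ {y : EuclideanSpace ℝ (Fin d) | (∀ i, 0 < y i) ∧ ∑ i, |z i - y i| < r},
          ∀ t : ℝ, (∑ j, z j) - r < t → t < (∑ j, z j) + r →
            ∃ (p : EuclideanSpace ℝ (Fin d)) (w : Fin (d - 1) → EuclideanSpace ℝ (Fin d)),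
              (∑ j, p j) = t ∧
              (∀ i, ∃ c : ℝ, 0 < c ∧ ∃ v ∈ permV d, w i = c • v) ∧
              (∀ x : EuclideanSpace ℝ (Fin d), (∑ j, x j) = 0 →
                x ∈ Submodule.span ℝ (Set.range w)) ∧
              {y : EuclideanSpace ℝ (Fin d) | (∀ i, 0 < y i) ∧ ∑ i, |z i - y i| < r}
                  ∩ {x | (∑ j, x j) = t}
                ⊆ (fun c : Fin (d - 1) → ℝ => p + ∑ i, c i • w i) '' Set.Icc 0 1 ∧
              (∃ ξt : EuclideanSpace ℝ (Fin d),
                (∀ j, ξt j = ξ j + (t - ∑ j, ξ j) / d) ∧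
                ξt ∈ (fun c : Fin (d - 1) → ℝ => p + ∑ i, c i • w i) '' Set.Icc 0 1) ∧
              μH[(d : ℝ) - 1]
                  ((fun c : Fin (d - 1) → ℝ => p + ∑ i, c i • w i) '' Set.Icc 0 1)
                ≤ ENNReal.ofReal
                    (C * (1 + max (t - ((∑ j, z j) - r)) ((∑ j, ξ j) - ((∑ j, z j) - r)))
                        ^ (d - 1)
                      * Real.exp ((∑ j, z j) - r))
                  * expMeasureE d
                      {y : EuclideanSpace ℝ (Fin d) |
                        (∀ i, 0 < y i) ∧ ∑ i, |z i - y i| < r} := by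
  obtain ⟨n, rfl⟩ : ∃ n, d = n + 1 := ⟨d - 1, by omega⟩
  exact main_aux n
end

section
/- Let m ≥ 2, let a₁,…,a_m > 0 and R > 0, and define E = {y ∈ ∏_{i=1}^m (0, aᵢ) : Σ_{i=1}^m yᵢ < R}. Then E is contained in the m-dimensional rectangle Ẽ = ∏_{i=1}^m (0, min(aᵢ, R)), and the Lebesgue measures satisfy c · ∏_{i=1}^m min(aᵢ, R) ≤ |E| ≤ ∏_{i=1}^m min(aᵢ, R) = |Ẽ|, where one may take c = m^{−m}; in particular |E| ≃ |Ẽ| with constants depending only on m. -/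
open MeasureTheory ENNReal

/-- For `m ≥ 2`, `a₁,…,a_m > 0` and `R > 0`, the set
`E = {y ∈ ∏ (0,aᵢ) : Σ yᵢ < R}` is contained in the rectangle
`Ẽ = ∏ (0, min(aᵢ,R))`, and `|E| ≃ |Ẽ| = ∏ min(aᵢ,R)`, with lower constant `m^{-m}`. -/
theorem simplex_box_measure (m : ℕ) (hm : 2 ≤ m) (a : Fin m → ℝ) (ha : ∀ i, 0 < a i)
    (R : ℝ) (hR : 0 < R) :
    {y : Fin m → ℝ | (∀ i, y i ∈ Set.Ioo 0 (a i)) ∧ ∑ i, y i < R}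
        ⊆ Set.univ.pi (fun i => Set.Ioo 0 (min (a i) R)) ∧
    volume (Set.univ.pi (fun i => Set.Ioo (0 : ℝ) (min (a i) R)))
        = ENNReal.ofReal (∏ i, min (a i) R) ∧
    ENNReal.ofReal (((m : ℝ) ^ m)⁻¹ * ∏ i, min (a i) R)
        ≤ volume {y : Fin m → ℝ | (∀ i, y i ∈ Set.Ioo 0 (a i)) ∧ ∑ i, y i < R} ∧
    volume {y : Fin m → ℝ | (∀ i, y i ∈ Set.Ioo 0 (a i)) ∧ ∑ i, y i < R}
        ≤ ENNReal.ofReal (∏ i, min (a i) R) := by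
  have hmR : (0 : ℝ) < m := by exact_mod_cast (by omega : 0 < m)
  have hmin : ∀ i, 0 < min (a i) R := fun i => lt_min (ha i) hR
  have hsub : {y : Fin m → ℝ | (∀ i, y i ∈ Set.Ioo 0 (a i)) ∧ ∑ i, y i < R}
      ⊆ Set.univ.pi (fun i => Set.Ioo 0 (min (a i) R)) := by
    rintro y ⟨hy, hs⟩ i -
    have h1 : y i ≤ ∑ j, y j :=
      Finset.single_le_sum (f := y) (fun j _ => (hy j).1.le) (Finset.mem_univ i)
    exact ⟨(hy i).1, lt_min (hy i).2 (h1.trans_lt hs)⟩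
  have hvol : volume (Set.univ.pi (fun i => Set.Ioo (0 : ℝ) (min (a i) R)))
        = ENNReal.ofReal (∏ i, min (a i) R) := by
    rw [Real.volume_pi_Ioo, ENNReal.ofReal_prod_of_nonneg (fun i _ => (hmin i).le)]
    simp
  refine ⟨hsub, hvol, ?_, (measure_mono hsub).trans hvol.le⟩
  have hsub2 : Set.univ.pi (fun i => Set.Ioo (0 : ℝ) (min (a i) R / m))
      ⊆ {y : Fin m → ℝ | (∀ i, y i ∈ Set.Ioo 0 (a i)) ∧ ∑ i, y i < R} := by
    intro y hy
    have hy' : ∀ i, y i ∈ Set.Ioo (0 : ℝ) (min (a i) R / m) := fun i => hy i (Set.mem_univ i)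
    have hm1 : (1 : ℝ) ≤ m := by exact_mod_cast (by omega : 1 ≤ m)
    refine ⟨fun i => ⟨(hy' i).1, (hy' i).2.trans_le
      ((div_le_self (hmin i).le hm1).trans (min_le_left _ _))⟩, ?_⟩
    have hlt : ∑ i, y i < ∑ _i : Fin m, R / m := by
      refine Finset.sum_lt_sum_of_nonempty ⟨⟨0, by omega⟩, Finset.mem_univ _⟩ (fun i _ => ?_)
      exact (hy' i).2.trans_le (div_le_div_of_nonneg_right (min_le_right _ _) hmR.le)
    refine hlt.trans_le (le_of_eq ?_)
    rw [Finset.sum_const, Finset.card_univ, Fintype.card_fin, nsmul_eq_mul]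
    field_simp
  refine le_trans (le_of_eq ?_) (measure_mono hsub2)
  have hprod : ((m : ℝ) ^ m)⁻¹ * ∏ i, min (a i) R = ∏ i, (min (a i) R / m) := by
    rw [Finset.prod_div_distrib, Finset.prod_const, Finset.card_univ, Fintype.card_fin]
    ring
  rw [hprod, Real.volume_pi_Ioo,
    ENNReal.ofReal_prod_of_nonneg (fun i _ => (div_pos (hmin i) hmR).le)]
  simp
end

section
/- There exist absolute constants c, C > 0 such that the following holds. Let 𝔞 > 2, r > √2, and m = (m₁, m₂) ∈ ℝ² satisfy m₂ ≥ 𝔞, (m₁ − 𝔞)² + (m₂ − 𝔞)² = r², and r/√2 < m₁ − 𝔞 ≤ r. For 0 < h ≤ r/√2 let ξ(h) be the unique positive number satisfying (m₁ − 𝔞 − h)² + (m₂ − 𝔞 + ξ(h))² = r². Then c · r h / (m₂ − 𝔞 + √(r h)) ≤ ξ(h) ≤ C · r h / (m₂ − 𝔞 + √(r h)); explicitly, ξ(h) = (2(m₁ − 𝔞)h − h²) / (m₂ − 𝔞 + √((m₂ − 𝔞)² + 2(m₁ − 𝔞)h − h²)). -/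
/-- Estimate for the vertical drop `ξ(h)` of a circle of radius `r` through `(𝔞,𝔞)` with
center `m = (m₁,m₂)`: if `(𝔞+h, 𝔞-ξ(h))` is the lower intersection of the line `x₁ = 𝔞+h`
with the circle, then `ξ(h) ≃ rh/(m₂-𝔞+√(rh))`, with absolute constants, and `ξ(h)` is given
by the explicit formula. -/
theorem circle_drop_estimate :
    ∃ c C : ℝ, 0 < c ∧ 0 < C ∧
      ∀ a r m₁ m₂ : ℝ, 2 < a → Real.sqrt 2 < r → a ≤ m₂ →
        (m₁ - a) ^ 2 + (m₂ - a) ^ 2 = r ^ 2 →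
        r / Real.sqrt 2 < m₁ - a → m₁ - a ≤ r →
        ∀ h : ℝ, 0 < h → h ≤ r / Real.sqrt 2 →
          ∀ x : ℝ, 0 < x → (m₁ - a - h) ^ 2 + (m₂ - a + x) ^ 2 = r ^ 2 →
            c * (r * h) / (m₂ - a + Real.sqrt (r * h)) ≤ x ∧
            x ≤ C * (r * h) / (m₂ - a + Real.sqrt (r * h)) ∧
            x = (2 * (m₁ - a) * h - h ^ 2)
              / ((m₂ - a) + Real.sqrt ((m₂ - a) ^ 2 + 2 * (m₁ - a) * h - h ^ 2)) := by
  refine ⟨1 / 4, 3, by norm_num, by norm_num, ?_⟩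
  intro a r m₁ m₂ _ hr hm hcirc hp1 hp2 h hh hh2 x hx hxc
  have hs2 : 0 < Real.sqrt 2 := by positivity
  have hr0 : 0 < r := hs2.trans hr
  have hs2le : Real.sqrt 2 ≤ 2 := by
    rw [Real.sqrt_le_left (by norm_num)]; norm_num
  have hk : r / 2 ≤ r / Real.sqrt 2 := div_le_div_of_nonneg_left hr0.le hs2 hs2le
  generalize r / Real.sqrt 2 = k at *
  obtain ⟨p, hp⟩ : ∃ p, p = m₁ - a := ⟨_, rfl⟩
  obtain ⟨q, hq⟩ : ∃ q, q = m₂ - a := ⟨_, rfl⟩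
  have hq0 : 0 ≤ q := by linarith
  rw [← hp] at hcirc hp1 hp2 hxc ⊢
  rw [← hq] at hcirc hxc ⊢
  have hD : x * (x + 2 * q) = 2 * p * h - h ^ 2 := by nlinarith
  have hrh : 0 < r * h := mul_pos hr0 hh
  obtain ⟨s, hs⟩ : ∃ s, s = Real.sqrt (r * h) := ⟨_, rfl⟩
  have hs0 : 0 < s := hs ▸ Real.sqrt_pos.mpr hrh
  have hss : s ^ 2 = r * h := by rw [hs]; exact Real.sq_sqrt hrh.le
  rw [← hs, ← hss]
  have hlow : s ^ 2 / 2 ≤ x * (x + 2 * q) := by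
    rw [hD, hss]; nlinarith
  have hup : x * (x + 2 * q) ≤ 2 * s ^ 2 := by
    rw [hD, hss]; nlinarith
  have hxq : 0 ≤ x * q := mul_nonneg hx.le hq0
  have hx2 : x ≤ 2 * s := by
    by_contra hc; nlinarith
  have hqs : 0 < q + s := by linarith
  refine ⟨?_, ?_, ?_⟩
  · rw [div_le_iff₀ hqs]; nlinarith
  · rw [le_div_iff₀ hqs]; nlinarith
  · have e : q ^ 2 + 2 * p * h - h ^ 2 = (q + x) ^ 2 := by linarith
    rw [e, Real.sqrt_sq (by linarith), eq_div_iff (by positivity), ← hD]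
    ring
end

section
/- Let C₊ = {x ∈ ℝ² : |x₂| < x₁} and let ν be the restriction to C₊ of the measure e^{−x₁} dx on ℝ². There is an absolute constant C > 0 such that the following holds. Let m ∈ C₊ with m₂ ≥ 0 and r > √2, let B̃ = B(m,r) ∩ C₊ be the truncated Euclidean ball, and suppose that the minimum of the first coordinate x₁ over the closure of B̃ is attained at the boundary point a = (𝔞, 𝔞) ∈ ∂C₊ with 𝔞 > 2. Then for every h > 0 the one-dimensional Lebesgue measure of the slice {x₂ ∈ ℝ : (𝔞 + h, x₂) ∈ B̃ + ((0,∞) × {0})} is at most C · (1 + h) · e^{𝔞} · ν(B̃). Here B̃ + ((0,∞) × {0}) is the shadow of B̃ in the positive x₁ direction. -/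
open MeasureTheory ENNReal

/-- The rotated cone `C₊ = {x ∈ ℝ² : |x₂| < x₁}`. -/
def conePlus : Set (Fin 2 → ℝ) := {x | |x 1| < x 0}

/-- The measure `ν`, the restriction to `C₊` of `e^{-x₁} dx` on `ℝ²`. -/
noncomputable def nuMeasure : Measure (Fin 2 → ℝ) :=
  (volume.withDensity (fun x => ENNReal.ofReal (Real.exp (-x 0)))).restrict conePlus

/-- The open Euclidean ball of center `m` and radius `r` in `ℝ²`. -/
def ball2 (m : Fin 2 → ℝ) (r : ℝ) : Set (Fin 2 → ℝ) :=
  {y | (y 0 - m 0) ^ 2 + (y 1 - m 1) ^ 2 < r ^ 2}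

/-- Extracting the geometry: the corner lies on the circle and below/left of the center. -/
lemma ssb_geom (m : Fin 2 → ℝ) (r a : ℝ) (ha : 2 < a)
    (hcl : (fun _ : Fin 2 => a) ∈ closure (ball2 m r ∩ conePlus))
    (hmin : ∀ x ∈ closure (ball2 m r ∩ conePlus), a ≤ x 0) :
    (a - m 0) ^ 2 + (a - m 1) ^ 2 = r ^ 2 ∧ a ≤ m 1 := by
  have hle : (a - m 0) ^ 2 + (a - m 1) ^ 2 ≤ r ^ 2 := by
    have hc : IsClosed {y : Fin 2 → ℝ | (y 0 - m 0) ^ 2 + (y 1 - m 1) ^ 2 ≤ r ^ 2} :=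
      isClosed_le (by fun_prop) (by fun_prop)
    have hsub : ball2 m r ∩ conePlus ⊆
        {y : Fin 2 → ℝ | (y 0 - m 0) ^ 2 + (y 1 - m 1) ^ 2 ≤ r ^ 2} := by
      intro y hy
      have h1 : (y 0 - m 0) ^ 2 + (y 1 - m 1) ^ 2 < r ^ 2 := hy.1
      exact h1.le
    exact closure_minimal hsub hc hcl
  have key : ∀ x y : ℝ, x < a → |y| < x → ¬ ((x - m 0) ^ 2 + (y - m 1) ^ 2 < r ^ 2) := by
    intro x y hx hy hb
    have := hmin ![x, y] (subset_closure ⟨by simpa [ball2] using hb, by simpa [conePlus] using hy⟩)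
    simp at this
    linarith
  have hge : r ^ 2 ≤ (a - m 0) ^ 2 + (a - m 1) ^ 2 := by
    by_contra hlt
    push Not at hlt
    have hcont : Continuous fun e : ℝ => (a - e - m 0) ^ 2 + (a - 2 * e - m 1) ^ 2 := by fun_prop
    have hev : ∀ᶠ e in nhds (0 : ℝ), (a - e - m 0) ^ 2 + (a - 2 * e - m 1) ^ 2 < r ^ 2 :=
      hcont.continuousAt.eventually_lt continuousAt_const (by simpa using hlt)
    obtain ⟨δ, hδ, hb⟩ := Metric.eventually_nhds_iff.1 hev
    have hm : 0 < min (δ / 2) (1 / 2) := by positivity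
    have h1 := min_le_left (δ / 2) (1 / 2)
    have h2 := min_le_right (δ / 2) (1 / 2)
    set e := min (δ / 2) (1 / 2)
    refine key (a - e) (a - 2 * e) (by linarith) ?_ (hb ?_)
    · rw [abs_lt]; constructor <;> linarith
    · rw [Real.dist_eq, sub_zero, abs_of_pos hm]; linarith
  refine ⟨le_antisymm hle hge, ?_⟩
  by_contra hq
  push Not at hq
  set k := a - m 1 with hk
  have hk0 : 0 < k := by linarith
  set U := |m 0 - a| with hU
  have hU0 : 0 ≤ U := abs_nonneg _
  have hUle : m 0 - a ≤ U := le_abs_self _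
  obtain ⟨η, hη0, hη1, hηU⟩ : ∃ η : ℝ, 0 < η ∧ η < 1 ∧ η * U ≤ k / 2 := by
    refine ⟨k / (2 * (U + k)), by positivity, ?_, ?_⟩
    · rw [div_lt_one (by positivity)]; linarith
    · rw [div_mul_eq_mul_div, div_le_div_iff₀ (by positivity) (by norm_num)]
      nlinarith [mul_pos hk0 hk0]
  have hm : 0 < min (k / 4) (1 / 2) := by positivity
  have h1 := min_le_left (k / 4) (1 / 2)
  have h2 := min_le_right (k / 4) (1 / 2)
  set δ := min (k / 4) (1 / 2)
  have hδη : δ * η < δ := by nlinarith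
  have hδη0 : 0 < δ * η := by positivity
  refine key (a - δ * η) (a - δ) (by linarith) ?_ ?_
  · rw [abs_lt]; constructor <;> linarith
  · have e1 : η * (m 0 - a) ≤ k / 2 := le_trans (mul_le_mul_of_nonneg_left hUle hη0.le) hηU
    have e2 : η ^ 2 < 1 := by nlinarith
    have e3 : δ * (1 + η ^ 2) + 2 * (η * (m 0 - a)) - 2 * k < 0 := by nlinarith
    have e4 := mul_neg_of_pos_of_neg hm e3
    have e5 : (a - δ * η - m 0) ^ 2 + (a - δ - m 1) ^ 2
        = (a - m 0) ^ 2 + (a - m 1) ^ 2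
          + δ * (δ * (1 + η ^ 2) + 2 * (η * (m 0 - a)) - 2 * k) := by
      rw [hk]; ring
    linarith

/-- Lower bound on `ν` of a set containing a box. -/
lemma ssb_box (B : Set (Fin 2 → ℝ)) (hB : B ⊆ conePlus) (a T : ℝ) (hT : 0 ≤ T)
    (hbox : ∀ x : Fin 2 → ℝ, a + 1 / 2 < x 0 → x 0 < a + 1 → a - T / 2 < x 1 →
      x 1 < a + 1 / 2 → x ∈ B) :
    ENNReal.ofReal (Real.exp (-(a + 1)) * ((1 + T) / 4)) ≤ nuMeasure B := by
  set Q : Set (Fin 2 → ℝ) :=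
    Set.pi Set.univ (fun i => Set.Ioo (![a + 1 / 2, a - T / 2] i) (![a + 1, a + 1 / 2] i)) with hQ
  have hmem : ∀ x ∈ Q, a + 1 / 2 < x 0 ∧ x 0 < a + 1 ∧ a - T / 2 < x 1 ∧ x 1 < a + 1 / 2 := by
    intro x hx
    have h0 := hx 0 (Set.mem_univ _)
    have h1 := hx 1 (Set.mem_univ _)
    simp only [Matrix.cons_val_zero, Matrix.cons_val_one, Set.mem_Ioo] at h0 h1
    exact ⟨h0.1, h0.2, h1.1, h1.2⟩
  have hQB : Q ⊆ B := fun x hx => by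
    obtain ⟨h1, h2, h3, h4⟩ := hmem x hx
    exact hbox x h1 h2 h3 h4
  have hQm : MeasurableSet Q := MeasurableSet.univ_pi fun i => measurableSet_Ioo
  have hvol : volume Q = ENNReal.ofReal ((1 + T) / 4) := by
    rw [hQ, Real.volume_pi_Ioo, Fin.prod_univ_two]
    simp only [Matrix.cons_val_zero, Matrix.cons_val_one]
    rw [← ENNReal.ofReal_mul (by linarith)]
    congr 1; ring
  refine le_trans ?_ (measure_mono hQB)
  rw [nuMeasure, Measure.restrict_apply hQm, Set.inter_eq_left.2 (hQB.trans hB),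
    withDensity_apply _ hQm, ENNReal.ofReal_mul (Real.exp_pos _).le, ← hvol, ← setLIntegral_const]
  refine setLIntegral_mono' hQm fun x hx => ?_
  apply ENNReal.ofReal_le_ofReal
  apply Real.exp_le_exp.2
  have := (hmem x hx).2.1
  linarith

set_option maxHeartbeats 1000000 in
theorem shadow_slice_bound :
    ∃ C : ℝ, 0 < C ∧
      ∀ (m : Fin 2 → ℝ) (r a : ℝ), m ∈ conePlus → 0 ≤ m 1 → Real.sqrt 2 < r → 2 < a →
        (fun _ : Fin 2 => a) ∈ closure (ball2 m r ∩ conePlus) →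
        (∀ x ∈ closure (ball2 m r ∩ conePlus), a ≤ x 0) →
        ∀ h : ℝ, 0 < h →
          volume {y : ℝ | ∃ b ∈ ball2 m r ∩ conePlus, ∃ s : ℝ,
              0 < s ∧ a + h = b 0 + s ∧ y = b 1}
            ≤ ENNReal.ofReal (C * (1 + h) * Real.exp a)
              * nuMeasure (ball2 m r ∩ conePlus) := by
  refine ⟨4 * Real.exp 1, by positivity, ?_⟩
  intro m r a hm hm1 hr ha hcl hmin h hh
  obtain ⟨hcirc, hq⟩ := ssb_geom m r a ha hcl hmin
  have hpq : m 1 < m 0 := lt_of_le_of_lt (le_abs_self _) hm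
  have hr2 : 2 < r ^ 2 := by
    have h0 := Real.sqrt_nonneg 2
    have h1 := Real.sq_sqrt (show (0 : ℝ) ≤ 2 by norm_num)
    nlinarith
  obtain ⟨u, hu⟩ : ∃ u, u = m 0 - a := ⟨_, rfl⟩
  obtain ⟨w, hw⟩ : ∃ w, w = m 1 - a := ⟨_, rfl⟩
  have hw0 : 0 ≤ w := by linarith
  have hwu : w < u := by linarith
  have hcirc' : u ^ 2 + w ^ 2 = r ^ 2 := by rw [hu, hw, ← hcirc]; ring
  have hu1 : 1 < u := by nlinarith
  have hmem : ∀ b : Fin 2 → ℝ, b ∈ ball2 m r ∩ conePlus ↔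
      (b 0 - a) ^ 2 + (b 1 - a) ^ 2 < 2 * (b 0 - a) * u + 2 * (b 1 - a) * w ∧
      b 1 < b 0 ∧ -(b 0) < b 1 := by
    intro b
    have e : (b 0 - m 0) ^ 2 + (b 1 - m 1) ^ 2 = (b 0 - a) ^ 2 + (b 1 - a) ^ 2
        - (2 * (b 0 - a) * u + 2 * (b 1 - a) * w) + r ^ 2 := by
      rw [← hcirc, hu, hw]; ring
    simp only [ball2, conePlus, Set.mem_inter_iff, Set.mem_ofPred_eq, abs_lt, e]
    constructor
    · rintro ⟨h1, h2, h3⟩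
      exact ⟨by linarith, h3, h2⟩
    · rintro ⟨h1, h2, h3⟩
      exact ⟨by linarith, h3, h2⟩
  obtain ⟨R, hR⟩ : ∃ R, R = Real.sqrt (w ^ 2 + 2 * u - 1) := ⟨_, rfl⟩
  have hR0 : 0 ≤ R := hR ▸ Real.sqrt_nonneg _
  have hRsq : R ^ 2 = w ^ 2 + 2 * u - 1 := by
    rw [hR]; exact Real.sq_sqrt (by nlinarith)
  obtain ⟨T, hT⟩ : ∃ T, T = min (2 * a + 1) (R - w) := ⟨_, rfl⟩
  have hRw : w ≤ R := by nlinarith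
  have hT0 : 0 ≤ T := hT ▸ le_min (by linarith) (by linarith)
  have hTa : T ≤ 2 * a + 1 := hT ▸ min_le_left _ _
  have hTR : T ≤ R - w := hT ▸ min_le_right _ _
  have hTq : T ^ 2 + 2 * T * w ≤ 2 * u - 1 := by nlinarith
  have hTmax : ∀ t : ℝ, 0 ≤ t → t ≤ 2 * a + 1 → t ^ 2 + 2 * t * w ≤ 2 * u - 1 → t ≤ T := by
    intro t ht h1 h2
    rw [hT]
    refine le_min h1 ?_
    have : t + w ≤ R := abs_le_of_sq_le_sq' (by nlinarith) hR0 |>.2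
    linarith
  have hnu := ssb_box (ball2 m r ∩ conePlus) Set.inter_subset_right a T hT0 (by
    intro x h1 h2 h3 h4
    rw [hmem]
    refine ⟨?_, by linarith, by linarith⟩
    obtain ⟨X, hX⟩ : ∃ X, X = x 0 - a := ⟨_, rfl⟩
    obtain ⟨Y, hY⟩ : ∃ Y, Y = x 1 - a := ⟨_, rfl⟩
    rw [← hX, ← hY]
    have hX1 : 1 / 2 < X := by linarith
    have hX2 : X < 1 := by linarith
    have hY1 : -(T / 2) < Y := by linarith
    have hY2 : Y < 1 / 2 := by linarith
    rcases le_or_gt 0 Y with hY0 | hY0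
    · have : 0 ≤ Y * w := mul_nonneg hY0 hw0
      have f1 : Y ^ 2 ≤ X ^ 2 := pow_le_pow_left₀ hY0 (by linarith) 2
      have f2 : X ^ 2 < X * u := by
        rw [pow_two]; exact mul_lt_mul_of_pos_left (by linarith) (by linarith)
      linarith
    · have e1 : (-Y) ^ 2 ≤ (T / 2) ^ 2 := pow_le_pow_left₀ (by linarith) (by linarith) 2
      have e2 : (-Y) * w ≤ T / 2 * w := mul_le_mul_of_nonneg_right (by linarith) hw0
      have e3 : 0 ≤ (X - 1 / 2) * (2 * u - X - 1 / 2) :=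
        mul_nonneg (by linarith) (by linarith)
      have e4 := sq_nonneg T
      ring_nf at e1 e2 e3 e4 hTq ⊢
      linarith)
  have hsub : {y : ℝ | ∃ b ∈ ball2 m r ∩ conePlus, ∃ s : ℝ,
      0 < s ∧ a + h = b 0 + s ∧ y = b 1} ⊆ Set.Icc (a - (1 + h) * T) (a + h) := by
    rintro y ⟨b, hb, s, hs, hs2, rfl⟩
    obtain ⟨h1, h2, h3⟩ := (hmem b).1 hb
    refine ⟨?_, by linarith⟩
    obtain ⟨X, hX⟩ : ∃ X, X = b 0 - a := ⟨_, rfl⟩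
    obtain ⟨t, ht⟩ : ∃ t, t = a - b 1 := ⟨_, rfl⟩
    have hXh : X < h := by linarith
    have h1' : t ^ 2 + 2 * t * w < 2 * X * u - X ^ 2 := by
      rw [hX, ht]; nlinarith
    have hta : t < 2 * a + X := by linarith
    suffices t ≤ (1 + h) * T by linarith
    rcases le_or_gt t 0 with ht0 | ht0
    · exact ht0.trans (by positivity)
    have htw : 0 ≤ t * w := by positivity
    have hX0 : 0 < X := by
      by_contra hc
      push Not at hc
      nlinarith [sq_nonneg X, sq_nonneg t]
    rcases le_or_gt X 1 with hX1 | hX1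
    · have : 0 ≤ (1 - X) * (2 * u - 1 - X) := mul_nonneg (by linarith) (by linarith)
      have := hTmax t ht0.le (by linarith) (by nlinarith)
      nlinarith
    · obtain ⟨v, hv⟩ : ∃ v, v = t / X := ⟨_, rfl⟩
      have htv : t = v * X := by rw [hv]; field_simp
      have hv0 : 0 < v := by rw [hv]; positivity
      have hva : v ≤ 2 * a + 1 := by
        rw [hv, div_le_iff₀ hX0]; nlinarith
      have h4 : X * (v ^ 2 * X + 2 * v * w) < X * (2 * u - X) := by
        rw [htv] at h1'; nlinarith
      have h5 := lt_of_mul_lt_mul_left h4 hX0.le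
      have h6 : v ^ 2 ≤ v ^ 2 * X := le_mul_of_one_le_right (sq_nonneg v) hX1.le
      have h7 := hTmax v hv0.le hva (by linarith)
      rw [htv, mul_comm (1 + h) T]
      exact mul_le_mul h7 (by linarith) hX0.le hT0
  calc _ ≤ volume (Set.Icc (a - (1 + h) * T) (a + h)) := measure_mono hsub
    _ = ENNReal.ofReal (h + (1 + h) * T) := by rw [Real.volume_Icc]; congr 1; ring
    _ ≤ ENNReal.ofReal ((4 * Real.exp 1 * (1 + h) * Real.exp a) *
          (Real.exp (-(a + 1)) * ((1 + T) / 4))) := by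
        apply ENNReal.ofReal_le_ofReal
        have e : Real.exp 1 * Real.exp a * Real.exp (-(a + 1)) = 1 := by
          rw [← Real.exp_add, ← Real.exp_add]; simp; ring
        have : (4 * Real.exp 1 * (1 + h) * Real.exp a) *
          (Real.exp (-(a + 1)) * ((1 + T) / 4)) =
            (Real.exp 1 * Real.exp a * Real.exp (-(a + 1))) * ((1 + h) * (1 + T)) := by ring
        rw [this, e]
        nlinarith
    _ = ENNReal.ofReal (4 * Real.exp 1 * (1 + h) * Real.exp a) *
          ENNReal.ofReal (Real.exp (-(a + 1)) * ((1 + T) / 4)) :=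
        ENNReal.ofReal_mul (by positivity)
    _ ≤ _ := by gcongr
end
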